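/- A set S of n-qubit Pauli operators is contextual if and only if for some B ∈ S there exists a determining tree for −B over S whose determining set is exactly {B}. -/

import Mathlib

/-!
Every Pauli operator squares to the identity. If `τ` and `τ'` are determining trees for `A` and
`-A` with the same determining set, then the node with children `τ` and `τ'` is a determining tree
for `A * -A = -1` in which every leaf label has even multiplicity. Joining this tree with a leaf
`B ∈ S` gives a tree for `-B` with determining set `{B}`. Such a `B` exists because a valid tree
without leaves has label `1`, and `1 ≠ -1` (`PTree.Valid.label_of_empty`).
Conversely, a tree for `-B` with determining set `{B}` is paired with the single leaf `B`.
-/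


open Matrix

/-- Index type for `n` qubits: `Fin n → Fin 2` has cardinality `2^n`. -/
abbrev QubitIdx (n : ℕ) := Fin n → Fin 2

/-- `2^n × 2^n` complex matrices. -/
abbrev Mat (n : ℕ) := Matrix (QubitIdx n) (QubitIdx n) ℂ

/-- The four single-qubit Pauli matrices `I, X, Y, Z`. -/
noncomputable def pauliMat : Fin 4 → Matrix (Fin 2) (Fin 2) ℂ :=
  ![1, !![0, 1; 1, 0], !![0, -Complex.I; Complex.I, 0], !![1, 0; 0, -1]]

/-- The tensor product `P₁ ⊗ ⋯ ⊗ Pₙ` of single-qubit Pauli matrices. -/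
noncomputable def pauliTensor (n : ℕ) (f : Fin n → Fin 4) : Mat n :=
  fun i k => ∏ j, pauliMat (f j) (i j) (k j)

/-- An `n`-qubit Pauli operator: `ε • P₁ ⊗ ⋯ ⊗ Pₙ` with `ε ∈ {1, -1}`. -/
def IsPauli (n : ℕ) (M : Mat n) : Prop :=
  ∃ (ε : ℂ) (f : Fin n → Fin 4), (ε = 1 ∨ ε = -1) ∧ M = ε • pauliTensor n f

/-- Two operators anticommute. -/
def PAntiCommute {n : ℕ} (A B : Mat n) : Prop := A * B = -(B * A)

/-- Finite rooted trees whose nodes are labeled by `2^n × 2^n` matrices.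
A `leaf` has no children; a `node` has a (finite) list of children. -/
inductive PTree (n : ℕ) : Type
  | leaf : Mat n → PTree n
  | node : Mat n → List (PTree n) → PTree n

namespace PTree

variable {n : ℕ}

/-- The label of the root of the tree. -/
def label : PTree n → Mat n
  | leaf M => M
  | node M _ => M

mutual
/-- The multiset of leaf labels of the tree. -/
def leaves : PTree n → Multiset (Mat n)
  | .leaf M => {M}
  | .node _ cs => leavesList cs
/-- The multiset of leaf labels of a list of trees. -/
def leavesList : List (PTree n) → Multiset (Mat n)
  | [] => 0
  | c :: cs => c.leaves + leavesList cs
end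

mutual
/-- The list of leaf labels of the tree in depth-first (left-to-right) order. -/
def leafList : PTree n → List (Mat n)
  | .leaf M => [M]
  | .node _ cs => leafListList cs
/-- The list of leaf labels of a list of trees, in depth-first order. -/
def leafListList : List (PTree n) → List (Mat n)
  | [] => []
  | c :: cs => c.leafList ++ leafListList cs
end

mutual
/-- The multiset of all node labels of the tree. -/
def nodeLabels : PTree n → Multiset (Mat n)
  | .leaf M => {M}
  | .node M cs => M ::ₘ nodeLabelsList cs
/-- The multiset of all node labels of a list of trees. -/
def nodeLabelsList : List (PTree n) → Multiset (Mat n)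
  | [] => 0
  | c :: cs => c.nodeLabels + nodeLabelsList cs
end

/-- The multiset of labels of all nodes at depth ≥ 2, i.e. strictly below
the children of the root. -/
def deepLabels : PTree n → Multiset (Mat n)
  | .leaf _ => 0
  | .node _ cs => (cs.map fun c =>
      match c with
      | .leaf _ => (0 : Multiset (Mat n))
      | .node _ cs' => nodeLabelsList cs').sum

/-- A valid determining tree over a set `S`: every leaf is labeled by an
element of `S`, every node is labeled by a Pauli operator, and for every
internal node, the labels of its children pairwise commute and the label of
the node is the matrix product of the labels of its children. -/
inductive Valid (S : Set (Mat n)) : PTree n → Prop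
  | leaf {M : Mat n} : M ∈ S → Valid S (PTree.leaf M)
  | node {M : Mat n} {cs : List (PTree n)} :
      IsPauli n M →
      M = (cs.map label).prod →
      cs.Pairwise (fun a b => Commute a.label b.label) →
      (∀ c ∈ cs, Valid S c) →
      Valid S (PTree.node M cs)

/-- Every internal node of the tree has at most two children. -/
inductive Binary : PTree n → Prop
  | leaf (M : Mat n) : Binary (PTree.leaf M)
  | node (M : Mat n) (cs : List (PTree n)) :
      cs.length ≤ 2 → (∀ c ∈ cs, Binary c) → Binary (PTree.node M cs)

open scoped Classical in
/-- The determining set of a tree: the set of operators occurring with odd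
total multiplicity among its leaves. -/
noncomputable def detSet (τ : PTree n) : Set (Mat n) :=
  {M | Odd (τ.leaves.count M)}

end PTree

/-- `τ` is a determining tree for `A` over `S`. -/
def IsDetTree {n : ℕ} (S : Set (Mat n)) (A : Mat n) (τ : PTree n) : Prop :=
  PTree.Valid S τ ∧ τ.label = A

/-- A set `S` of Pauli operators is contextual if for some Pauli operator `A`
there are determining trees for `A` and for `-A` over `S` with identical
determining sets. -/
def Contextual (n : ℕ) (S : Set (Mat n)) : Prop :=
  ∃ (A : Mat n) (τ τ' : PTree n), IsPauli n A ∧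
    IsDetTree S A τ ∧ IsDetTree S (-A) τ' ∧ τ.detSet = τ'.detSet

theorem pauliMat_mul_self (a : Fin 4) : pauliMat a * pauliMat a = 1 := by
  fin_cases a <;> ext i j <;> fin_cases i <;> fin_cases j <;>
    simp [pauliMat, Matrix.mul_apply, Fin.sum_univ_two]

theorem pauliTensor_mul_self {n : ℕ} (f : Fin n → Fin 4) :
    pauliTensor n f * pauliTensor n f = 1 := by
  ext i k
  -- The sum over intermediate indices of a product over qubits factors into a product of sums.
  have h : (pauliTensor n f * pauliTensor n f) i k
      = ∏ j, (pauliMat (f j) * pauliMat (f j)) (i j) (k j) := by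
    simp only [Matrix.mul_apply, pauliTensor, ← Finset.prod_mul_distrib]
    rw [Finset.prod_univ_sum, Fintype.piFinset_univ]
  rw [h]
  simp only [pauliMat_mul_self, Matrix.one_apply, Finset.prod_ite_zero, funext_iff]
  simp

theorem pauliTensor_zero (n : ℕ) : pauliTensor n (fun _ => 0) = 1 := by
  ext i k
  simp only [pauliTensor, pauliMat, Matrix.cons_val_zero, Matrix.one_apply,
    Finset.prod_ite_zero, funext_iff]
  simp

theorem IsPauli.mul_self {n : ℕ} {M : Mat n} (h : IsPauli n M) : M * M = 1 := by
  obtain ⟨ε, f, hε, rfl⟩ := h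
  rcases hε with rfl | rfl <;> simp [pauliTensor_mul_self]

theorem IsPauli.neg {n : ℕ} {M : Mat n} (h : IsPauli n M) : IsPauli n (-M) := by
  obtain ⟨ε, f, hε, rfl⟩ := h
  refine ⟨-ε, f, ?_, by simp⟩
  rcases hε with rfl | rfl <;> simp

theorem isPauli_one (n : ℕ) : IsPauli n 1 :=
  ⟨1, fun _ => 0, Or.inl rfl, by simp [pauliTensor_zero]⟩

namespace PTree

/-- Over the empty set the only valid trees have no leaves at all (they end in internal nodes
without children, which carry the empty product), so their label is the identity. -/
theorem Valid.label_of_empty {n : ℕ} {τ : PTree n} (h : Valid ∅ τ) : τ.label = 1 := by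
  induction h with
  | leaf h => exact absurd h (Set.notMem_empty _)
  | node _ hM _ _ ih =>
    rw [label, hM]
    apply List.prod_eq_one
    simpa using ih

theorem Valid.pair {n : ℕ} {S : Set (Mat n)} {M : Mat n} {a b : PTree n} (hM : IsPauli n M)
    (h : M = a.label * b.label) (hc : Commute a.label b.label) (ha : Valid S a)
    (hb : Valid S b) : Valid S (PTree.node M [a, b]) :=
  Valid.node hM (by simpa using h) (by simpa using hc) (by simp [ha, hb])

theorem leaves_pair {n : ℕ} (M : Mat n) (a b : PTree n) :
    (node M [a, b]).leaves = a.leaves + b.leaves := by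
  simp [leaves, leavesList]

theorem detSet_leaf {n : ℕ} (M : Mat n) : (leaf M).detSet = {M} := by
  ext N
  by_cases h : N = M <;> simp [detSet, leaves, Multiset.count_singleton, h]

/-- Joining two trees takes the symmetric difference of their determining sets. -/
theorem mem_detSet_pair {n : ℕ} (M N : Mat n) (a b : PTree n) :
    N ∈ (node M [a, b]).detSet ↔ ¬ (N ∈ a.detSet ↔ N ∈ b.detSet) := by
  simp only [detSet, Set.mem_ofPred_eq, leaves_pair, Multiset.count_add, Nat.odd_add,
    ← Nat.not_odd_iff_even]
  tauto

end PTree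

/-- `S` is contextual iff for some `B ∈ S` there is a determining
tree for `-B` over `S` whose determining set is exactly `{B}`. -/
theorem contextual_iff_detTree_neg_mem {n : ℕ} (S : Set (Mat n))
    (hS : ∀ M ∈ S, IsPauli n M) :
    Contextual n S ↔
      ∃ B ∈ S, ∃ τ : PTree n, IsDetTree S (-B) τ ∧ τ.detSet = {B} := by
  constructor
  · rintro ⟨A, τ, τ', hA, ⟨hτ, hl⟩, ⟨hτ', hl'⟩, hd⟩
    have hne : S.Nonempty := by
      by_contra hne
      obtain rfl := Set.not_nonempty_iff_eq_empty.mp hne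
      rw [hτ.label_of_empty] at hl
      rw [hτ'.label_of_empty, ← hl] at hl'
      have h := congrFun (congrFun hl' 0) 0
      norm_num at h
    obtain ⟨B, hB⟩ := hne
    have hσ : PTree.Valid S (.node (-1) [τ, τ']) :=
      .pair (isPauli_one n).neg (by rw [hl, hl', mul_neg, hA.mul_self])
        (by rw [hl, hl']; exact (Commute.refl A).neg_right) hτ hτ'
    refine ⟨B, hB, .node (-B) [.leaf B, .node (-1) [τ, τ']], ⟨?_, rfl⟩, ?_⟩
    · exact .pair (hS B hB).neg (by simp [PTree.label])
        (by simp [PTree.label]) (.leaf hB) hσ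
    · ext N
      simp [PTree.mem_detSet_pair, hd, PTree.detSet_leaf]
  · rintro ⟨B, hB, τ, hτ, hd⟩
    exact ⟨B, .leaf B, τ, hS B hB, ⟨.leaf hB, rfl⟩, hτ, by rw [hd, PTree.detSet_leaf]⟩
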